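/- If α, β : ℝ² → ℂ are continuous functions such that z² + a₁z + a₀ = (z − α(a₀,a₁))·(z − β(a₀,a₁)) for all (a₀, a₁) ∈ ℝ² and all z ∈ ℂ, then the unordered pair {α, β} equals either {r_{+1,+1}, r_{−1,−1}} or {r_{−1,+1}, r_{+1,−1}}; that is, the family of monic real quadratics has exactly two complete sets of continuous roots. -/

import Mathlib

/-- For signs `ε, δ ∈ {−1, +1}`, the root `r_{ε,δ}` of the monic real quadratic
`z² + a₁z + a₀`: it equals `−a₁/2 + ε·√(D)/2` when `D := a₁² − 4a₀ ≥ 0` and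
`−a₁/2 + δ·i·√(−D)/2` when `D < 0`. -/
noncomputable def rQuad (ε δ : ℝ) : ℝ × ℝ → ℂ := fun p =>
  if p.2 ^ 2 - 4 * p.1 ≥ 0 then
    -(p.2 : ℂ) / 2 + (ε : ℂ) * (Real.sqrt (p.2 ^ 2 - 4 * p.1) : ℂ) / 2
  else
    -(p.2 : ℂ) / 2 + (δ : ℂ) * Complex.I * (Real.sqrt (4 * p.1 - p.2 ^ 2) : ℂ) / 2

/-!
If `α` is a continuous root, then `s = 2α + a₁` is a continuous square root of the discriminant `D`.
The map `(d, a₁) ↦ ((a₁² - d) / 4, a₁)` straightens `D` to a coordinate, so the regions `0 < D`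
and `D < 0` are connected; on each of them `s` is a fixed sign times a reference square root of `D`.
These two signs determine `α`, and the other root is `-a₁ - α`.
-/

open Complex

/-- The square root of a real number in `ℂ` with sign `ε` on the positive and sign `δ` on the
negative half-line. Since `Real.sqrt` vanishes on negative numbers, at most one summand is nonzero,
and the function is visibly continuous. -/
noncomputable def signedSqrt (ε δ x : ℝ) : ℂ :=
  ε * (√x : ℝ) + δ * I * (√(-x) : ℝ)

theorem signedSqrt_of_nonneg (ε δ : ℝ) {x : ℝ} (hx : 0 ≤ x) :
    signedSqrt ε δ x = ε * (√x : ℝ) := by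
  simp [signedSqrt, Real.sqrt_eq_zero_of_nonpos (neg_nonpos.2 hx)]

theorem signedSqrt_of_nonpos (ε δ : ℝ) {x : ℝ} (hx : x ≤ 0) :
    signedSqrt ε δ x = δ * I * (√(-x) : ℝ) := by
  simp [signedSqrt, Real.sqrt_eq_zero_of_nonpos hx]

theorem signedSqrt_neg_neg (ε δ x : ℝ) : signedSqrt (-ε) (-δ) x = -signedSqrt ε δ x := by
  simp only [signedSqrt, ofReal_neg]
  ring

theorem continuous_signedSqrt (ε δ : ℝ) : Continuous (signedSqrt ε δ) := by
  unfold signedSqrt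
  fun_prop

theorem signedSqrt_sq {ε δ : ℝ} (hε : ε ^ 2 = 1) (hδ : δ ^ 2 = 1) (x : ℝ) :
    signedSqrt ε δ x ^ 2 = x := by
  rcases le_total 0 x with hx | hx
  · rw [signedSqrt_of_nonneg ε δ hx, mul_pow, ← ofReal_pow, ← ofReal_pow, hε, Real.sq_sqrt hx,
      ofReal_one, one_mul]
  · rw [signedSqrt_of_nonpos ε δ hx, mul_pow, mul_pow, I_sq, ← ofReal_pow, ← ofReal_pow, hδ,
      Real.sq_sqrt (neg_nonneg.2 hx), ofReal_one, ofReal_neg, one_mul, neg_one_mul, neg_neg]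

section ContinuousSquareRoots

variable {X : Type*} [TopologicalSpace X] {d : X → ℝ} {s : X → ℂ}

theorem exists_sign_eq_mul_signedSqrt {S : Set X} (hS : IsPreconnected S) (hs : ContinuousOn s S)
    (hd : ContinuousOn d S) (hd₀ : ∀ x ∈ S, d x ≠ 0) (hsq : ∀ x ∈ S, s x ^ 2 = d x) :
    ∃ ε : ℝ, (ε = 1 ∨ ε = -1) ∧ ∀ x ∈ S, s x = ε * signedSqrt 1 1 (d x) := by
  have sq_ref (x : X) : signedSqrt 1 1 (d x) ^ 2 = d x := signedSqrt_sq (one_pow 2) (one_pow 2) _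
  have ref_ne_zero {x : X} (hx : x ∈ S) : signedSqrt 1 1 (d x) ≠ 0 := by
    rw [← pow_ne_zero_iff two_ne_zero, sq_ref, ofReal_ne_zero]
    exact hd₀ x hx
  have ref_continuousOn : ContinuousOn (fun x => signedSqrt 1 1 (d x)) S :=
    (continuous_signedSqrt 1 1).comp_continuousOn hd
  rcases hS.eq_or_eq_neg_of_sq_eq hs ref_continuousOn
    (fun x hx => (hsq x hx).trans (sq_ref x).symm) ref_ne_zero with heq | heq
  · exact ⟨1, .inl rfl, fun x hx => by simpa using heq hx⟩
  · exact ⟨-1, .inr rfl, fun x hx => by simpa using heq hx⟩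

theorem exists_signs_eq_signedSqrt (hd : Continuous d) (hpos : IsPreconnected {x | 0 < d x})
    (hneg : IsPreconnected {x | d x < 0}) (hs : Continuous s) (hsq : ∀ x, s x ^ 2 = d x) :
    ∃ ε δ : ℝ, (ε = 1 ∨ ε = -1) ∧ (δ = 1 ∨ δ = -1) ∧ ∀ x, s x = signedSqrt ε δ (d x) := by
  obtain ⟨ε, hε, hsε⟩ := exists_sign_eq_mul_signedSqrt hpos hs.continuousOn hd.continuousOn
    (fun _ hx => ne_of_gt hx) fun x _ => hsq x
  obtain ⟨δ, hδ, hsδ⟩ := exists_sign_eq_mul_signedSqrt hneg hs.continuousOn hd.continuousOn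
    (fun _ hx => ne_of_lt hx) fun x _ => hsq x
  refine ⟨ε, δ, hε, hδ, fun x => ?_⟩
  rcases lt_trichotomy (d x) 0 with hx | hx | hx
  · rw [hsδ x hx, signedSqrt_of_nonpos _ _ hx.le, signedSqrt_of_nonpos _ _ hx.le, ofReal_one,
      one_mul, mul_assoc]
  · have hsx : s x = 0 := by simpa [hx] using hsq x
    simp [hsx, hx, signedSqrt]
  · rw [hsε x hx, signedSqrt_of_nonneg _ _ hx.le, signedSqrt_of_nonneg _ _ hx.le, ofReal_one,
      one_mul]

end ContinuousSquareRoots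

theorem isPreconnected_setOf_discrim_mem {J : Set ℝ} (hJ : IsPreconnected J) :
    IsPreconnected {p : ℝ × ℝ | discrim 1 p.2 p.1 ∈ J} := by
  have image_straighten : Set.image (fun q : ℝ × ℝ => ((q.2 ^ 2 - q.1) / 4, q.2)) (J ×ˢ Set.univ) =
      {p : ℝ × ℝ | discrim 1 p.2 p.1 ∈ J} := by
    ext ⟨a₀, a₁⟩
    constructor
    · rintro ⟨⟨d, b⟩, ⟨hd, -⟩, hq⟩
      obtain ⟨rfl, rfl⟩ := Prod.mk.inj hq
      have discrim_straighten : discrim 1 b ((b ^ 2 - d) / 4) = d := by rw [discrim]; ring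
      rwa [Set.mem_ofPred_eq, discrim_straighten]
    · intro hp
      exact ⟨(discrim 1 a₁ a₀, a₁), ⟨hp, Set.mem_univ _⟩, by simp [discrim]⟩
  rw [← image_straighten]
  exact (hJ.prod isPreconnected_univ).image _ (by fun_prop)

theorem rQuad_eq_signedSqrt (ε δ : ℝ) (p : ℝ × ℝ) :
    rQuad ε δ p = (-p.2 + signedSqrt ε δ (discrim 1 p.2 p.1)) / 2 := by
  have hD : discrim 1 p.2 p.1 = p.2 ^ 2 - 4 * p.1 := by rw [discrim, mul_one]
  rw [rQuad, hD, add_div]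
  split_ifs with h
  · rw [signedSqrt_of_nonneg ε δ h]
  · rw [signedSqrt_of_nonpos ε δ (not_le.1 h).le, neg_sub]

theorem rQuad_add_rQuad_neg_neg (ε δ : ℝ) (p : ℝ × ℝ) :
    rQuad ε δ p + rQuad (-ε) (-δ) p = -p.2 := by
  rw [rQuad_eq_signedSqrt, rQuad_eq_signedSqrt, signedSqrt_neg_neg]
  ring

theorem exists_eq_rQuad_of_continuous_of_root {α : ℝ × ℝ → ℂ} (hα : Continuous α)
    (hroot : ∀ p, α p ^ 2 + p.2 * α p + p.1 = 0) :
    ∃ ε δ : ℝ, (ε = 1 ∨ ε = -1) ∧ (δ = 1 ∨ δ = -1) ∧ α = rQuad ε δ := by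
  have sq_eq_discrim (p : ℝ × ℝ) : (2 * α p + p.2) ^ 2 = (discrim 1 p.2 p.1 : ℝ) := by
    rw [discrim]
    push_cast
    linear_combination 4 * hroot p
  have continuous_discrim : Continuous fun p : ℝ × ℝ => discrim 1 p.2 p.1 := by
    unfold discrim
    fun_prop
  obtain ⟨ε, δ, hε, hδ, hs⟩ := exists_signs_eq_signedSqrt continuous_discrim
    (isPreconnected_setOf_discrim_mem isPreconnected_Ioi)
    (isPreconnected_setOf_discrim_mem isPreconnected_Iio) (by fun_prop) sq_eq_discrim
  refine ⟨ε, δ, hε, hδ, funext fun p => ?_⟩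
  rw [rQuad_eq_signedSqrt, ← hs p]
  ring

theorem add_eq_neg_of_monic_quadratic_factorization {R : Type*} [CommRing R] {b c x y : R}
    (hfac : ∀ z, z ^ 2 + b * z + c = (z - x) * (z - y)) : x + y = -b := by
  linear_combination hfac 1 - hfac 0

/-- If continuous `α, β : ℝ² → ℂ` give a full factorization of every monic real quadratic,
then the unordered pair `{α, β}` is `{r_{1,1}, r_{−1,−1}}` or `{r_{−1,1}, r_{1,−1}}`: the family
of monic real quadratics has exactly two complete sets of continuous roots. -/
theorem complete_sets_of_continuous_roots_quadratic_real (α β : ℝ × ℝ → ℂ)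
    (hα : Continuous α) (hβ : Continuous β)
    (hfac : ∀ a₀ a₁ : ℝ, ∀ z : ℂ,
      z ^ 2 + (a₁ : ℂ) * z + (a₀ : ℂ) = (z - α (a₀, a₁)) * (z - β (a₀, a₁))) :
    ({α, β} : Set (ℝ × ℝ → ℂ)) = {rQuad 1 1, rQuad (-1) (-1)} ∨
      ({α, β} : Set (ℝ × ℝ → ℂ)) = {rQuad (-1) 1, rQuad 1 (-1)} := by
  have hroot (p : ℝ × ℝ) : α p ^ 2 + p.2 * α p + p.1 = 0 := by
    rw [hfac p.1 p.2 (α p), sub_self, zero_mul]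
  have hsum (p : ℝ × ℝ) : α p + β p = -p.2 :=
    add_eq_neg_of_monic_quadratic_factorization (hfac p.1 p.2)
  obtain ⟨ε, δ, hε, hδ, rfl⟩ := exists_eq_rQuad_of_continuous_of_root hα hroot
  obtain rfl : β = rQuad (-ε) (-δ) := funext fun p =>
    add_left_cancel ((hsum p).trans (rQuad_add_rQuad_neg_neg ε δ p).symm)
  rcases hε with rfl | rfl <;> rcases hδ with rfl | rfl
  · exact .inl rfl
  · rw [neg_neg, Set.pair_comm]
    exact .inr rfl
  · rw [neg_neg]
    exact .inr rfl
  · rw [neg_neg, Set.pair_comm]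
    exact .inl rfl
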